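/- arXiv:1408.1284 — 9 statements merged into one kernel-verified Lean document; each statement's English description precedes it below -/
import Mathlib

section
/- For any two tuples (f^{(1)},…,f^{(s)}) and (g^{(1)},…,g^{(s)}) of linearized polynomials over F_{q^m} with deg_q(f^{(j)}) < k^{(j)} and deg_q(g^{(j)}) < k^{(j)} for all j, such that f^{(j)} ≠ g^{(j)} for at least one j, the associated codewords V and V' satisfy d_S(V, V') ≥ 2(n_t − max_{1≤j≤s} k^{(j)} + 1). -/
/-- `P` is a linearized polynomial with respect to `q`: every nonzero coefficient
sits at an index that is a power of `q`, i.e. `P = Σ p_i x^(q^i)`. -/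
def IsLinearized (q : ℕ) {K : Type*} [Field K] (P : Polynomial K) : Prop :=
  ∀ n : ℕ, P.coeff n ≠ 0 → ∃ i : ℕ, n = q ^ i

/-- The subspace distance `d_S(U,V) = dim(U+V) − dim(U∩V)`. -/
noncomputable def subspaceDist {Fq W : Type*} [Field Fq] [AddCommGroup W] [Module Fq W]
    (U V : Submodule Fq W) : ℕ :=
  Module.finrank Fq ↥(U ⊔ V) - Module.finrank Fq ↥(U ⊓ V)

theorem aux_pow_add (Fq K : Type*) [Field Fq] [Fintype Fq] [Field K] [Algebra Fq K]
    (i : ℕ) (x y : K) : (x + y) ^ (Fintype.card Fq ^ i)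
      = x ^ (Fintype.card Fq ^ i) + y ^ (Fintype.card Fq ^ i) := by
  induction i with
  | zero => simp
  | succ i ih =>
    have h := fun a b : K => map_add (FiniteField.frobeniusAlgHom Fq K) a b
    simp only [FiniteField.coe_frobeniusAlgHom] at h
    rw [pow_succ, pow_mul, ih, h, ← pow_mul, ← pow_mul]

theorem aux_pow_smul (Fq K : Type*) [Field Fq] [Fintype Fq] [Field K] [Algebra Fq K]
    (i : ℕ) (c : Fq) (x : K) : (c • x) ^ (Fintype.card Fq ^ i)
      = c • x ^ (Fintype.card Fq ^ i) := by
  rw [smul_pow, FiniteField.pow_card_pow]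

/-- Evaluation of a linearized polynomial as a linear map. -/
noncomputable def evalLin (Fq K : Type*) [Field Fq] [Fintype Fq] [Field K] [Algebra Fq K]
    (P : Polynomial K) (hP : IsLinearized (Fintype.card Fq) P) : K →ₗ[Fq] K where
  toFun x := P.eval x
  map_add' x y := by
    simp only [Polynomial.eval_eq_sum, Polynomial.sum]
    rw [← Finset.sum_add_distrib]
    refine Finset.sum_congr rfl fun n hn => ?_
    obtain ⟨i, rfl⟩ := hP n (Polynomial.mem_support_iff.1 hn)
    rw [aux_pow_add, mul_add]
  map_smul' c x := by
    simp only [Polynomial.eval_eq_sum, Polynomial.sum, RingHom.id_apply]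
    rw [Finset.smul_sum]
    refine Finset.sum_congr rfl fun n hn => ?_
    obtain ⟨i, rfl⟩ := hP n (Polynomial.mem_support_iff.1 hn)
    rw [aux_pow_smul, mul_smul_comm]

/-- The encoding map. -/
noncomputable def encLin (Fq K : Type*) [Field Fq] [Fintype Fq] [Field K] [Algebra Fq K]
    {s : ℕ} (f : Fin s → Polynomial K) (hf : ∀ j, IsLinearized (Fintype.card Fq) (f j)) :
    K →ₗ[Fq] (Fin (s + 1) → K) :=
  LinearMap.pi (Fin.cons LinearMap.id fun j => evalLin Fq K (f j) (hf j))

theorem encLin_zero (Fq K : Type*) [Field Fq] [Fintype Fq] [Field K] [Algebra Fq K]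
    {s : ℕ} (f : Fin s → Polynomial K) (hf : ∀ j, IsLinearized (Fintype.card Fq) (f j)) (x : K) :
    encLin Fq K f hf x 0 = x := by simp [encLin]

theorem encLin_succ (Fq K : Type*) [Field Fq] [Fintype Fq] [Field K] [Algebra Fq K]
    {s : ℕ} (f : Fin s → Polynomial K) (hf : ∀ j, IsLinearized (Fintype.card Fq) (f j)) (x : K)
    (j : Fin s) :
    encLin Fq K f hf x j.succ = (f j).eval x := by simp [encLin, evalLin]

theorem span_eq_map (Fq K : Type*) [Field Fq] [Fintype Fq] [Field K] [Algebra Fq K]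
    {s nt : ℕ} (α : Fin nt → K)
    (f : Fin s → Polynomial K) (hf : ∀ j, IsLinearized (Fintype.card Fq) (f j)) :
    Submodule.span Fq (Set.range fun i : Fin nt =>
            (Fin.cons (α i) (fun j : Fin s => (f j).eval (α i)) : Fin (s + 1) → K))
      = (Submodule.span Fq (Set.range α)).map (encLin Fq K f hf) := by
  rw [Submodule.map_span, ← Set.range_comp]
  congr 2
  funext i j
  refine Fin.cases ?_ (fun j => ?_) j
  · simp [encLin_zero]
  · simp [encLin_succ]

theorem finrank_code (Fq K : Type*) [Field Fq] [Fintype Fq] [Field K] [Algebra Fq K]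
    {s nt : ℕ} (α : Fin nt → K) (hα : LinearIndependent Fq α)
    (f : Fin s → Polynomial K) (hf : ∀ j, IsLinearized (Fintype.card Fq) (f j)) :
    Module.finrank Fq ((Submodule.span Fq (Set.range α)).map (encLin Fq K f hf)) = nt := by
  have hinj : Function.Injective (encLin Fq K f hf) := by
    intro x y h
    simpa [encLin_zero] using congrFun h 0
  rw [← (Submodule.equivMapOfInjective _ hinj (Submodule.span Fq (Set.range α))).finrank_eq]
  simpa using finrank_span_eq_card hα

theorem finrank_inf_lt (Fq K : Type*) [Field Fq] [Fintype Fq] [Field K] [Algebra Fq K]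
    [Finite K] {s : ℕ} (A : Submodule Fq K) (k : ℕ)
    (f g : Fin s → Polynomial K) (hf : ∀ j, IsLinearized (Fintype.card Fq) (f j))
    (hg : ∀ j, IsLinearized (Fintype.card Fq) (g j)) (j : Fin s) (hne : f j ≠ g j)
    (hfd : (f j).degree < ((Fintype.card Fq ^ k : ℕ) : WithBot ℕ))
    (hgd : (g j).degree < ((Fintype.card Fq ^ k : ℕ) : WithBot ℕ)) :
    Module.finrank Fq ↥(A.map (encLin Fq K f hf) ⊓ A.map (encLin Fq K g hg)) < k := by
  classical
  set I := A.map (encLin Fq K f hf) ⊓ A.map (encLin Fq K g hg) with hI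
  have hP : f j - g j ≠ 0 := sub_ne_zero.2 hne
  have key : ∀ v ∈ I, v = encLin Fq K f hf (v 0) ∧ (f j - g j).eval (v 0) = 0 := by
    rintro v ⟨⟨x, -, hx⟩, ⟨y, -, hy⟩⟩
    have hx0 : v 0 = x := by rw [← hx, encLin_zero]
    have hy0 : v 0 = y := by rw [← hy, encLin_zero]
    have h1 := encLin_succ Fq K f hf x j
    have h2 := encLin_succ Fq K g hg y j
    rw [hx] at h1
    rw [hy] at h2
    refine ⟨by rw [hx0, hx], ?_⟩
    rw [Polynomial.eval_sub, sub_eq_zero]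
    nth_rewrite 1 [hx0]
    rw [hy0, ← h1, ← h2]
  have hcard : Nat.card I ≤ (f j - g j).natDegree := by
    have h1 : Nat.card I ≤ Nat.card (f j - g j).roots.toFinset := by
      refine Nat.card_le_card_of_injective
        (fun v : I => (⟨v.1 0, by
          rw [Multiset.mem_toFinset, Polynomial.mem_roots hP]
          exact (key v.1 v.2).2⟩ : (f j - g j).roots.toFinset)) ?_
      intro v w h
      have h0 : v.1 0 = w.1 0 := congrArg Subtype.val h
      apply Subtype.ext
      rw [(key v.1 v.2).1, (key w.1 w.2).1, h0]
    rw [Nat.card_eq_fintype_card (α := (f j - g j).roots.toFinset), Fintype.card_coe] at h1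
    exact h1.trans ((Multiset.toFinset_card_le _).trans (Polynomial.card_roots' _))
  have hdeg : (f j - g j).natDegree < Fintype.card Fq ^ k := by
    rw [Polynomial.natDegree_lt_iff_degree_lt hP]
    exact (Polynomial.degree_sub_le _ _).trans_lt (max_lt hfd hgd)
  have hc : Nat.card I = Fintype.card Fq ^ Module.finrank Fq I := by
    rw [Module.natCard_eq_pow_finrank (K := Fq), Nat.card_eq_fintype_card]
  rw [hc] at hcard
  exact (Nat.pow_lt_pow_iff_right Fintype.one_lt_card).1 (hcard.trans_lt hdeg)

/-- For any two tuples of message polynomials of the interleaved subspace code that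
differ in at least one component, the associated codewords `V`, `V'` satisfy
`d_S(V,V') ≥ 2(n_t − max_j k⁽ʲ⁾ + 1)`. -/
theorem subspaceDist_ge_of_ne
    (Fq K : Type*) [Field Fq] [Fintype Fq] [Field K] [Algebra Fq K]
    (q m s nt : ℕ) (hq : Fintype.card Fq = q) (hm : 0 < m)
    (hK : Module.finrank Fq K = m) (hnt : nt ≤ m) (hs : 1 ≤ s)
    (α : Fin nt → K) (hα : LinearIndependent Fq α)
    (k : Fin s → ℕ) (hk : ∀ j, 1 ≤ k j ∧ k j < nt)
    (f g : Fin s → Polynomial K)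
    (hfl : ∀ j, IsLinearized q (f j)) (hgl : ∀ j, IsLinearized q (g j))
    (hfd : ∀ j, (f j).degree < ((q ^ k j : ℕ) : WithBot ℕ))
    (hgd : ∀ j, (g j).degree < ((q ^ k j : ℕ) : WithBot ℕ))
    (hne : f ≠ g) :
    2 * (nt - Finset.univ.sup k + 1) ≤
      subspaceDist
        (Submodule.span Fq
          (Set.range fun i : Fin nt =>
            (Fin.cons (α i) (fun j : Fin s => (f j).eval (α i)) : Fin (s + 1) → K)))
        (Submodule.span Fq
          (Set.range fun i : Fin nt =>
            (Fin.cons (α i) (fun j : Fin s => (g j).eval (α i)) : Fin (s + 1) → K))) := by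
  subst hq
  have : Module.Finite Fq K := Module.finite_of_finrank_pos (hK ▸ hm)
  have : Finite K := Module.finite_of_finite Fq
  obtain ⟨j, hj⟩ := Function.ne_iff.1 hne
  rw [span_eq_map Fq K α f hfl, span_eq_map Fq K α g hgl, subspaceDist]
  have h1 := finrank_code Fq K α hα f hfl
  have h2 := finrank_code Fq K α hα g hgl
  have h3 := finrank_inf_lt Fq K (Submodule.span Fq (Set.range α)) (k j) f g hfl hgl j hj
    (hfd j) (hgd j)
  have h4 := Submodule.finrank_sup_add_finrank_inf_eq
    ((Submodule.span Fq (Set.range α)).map (encLin Fq K f hfl))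
    ((Submodule.span Fq (Set.range α)).map (encLin Fq K g hgl))
  have h5 : k j ≤ Finset.univ.sup k := Finset.le_sup (Finset.mem_univ j)
  have h6 : Finset.univ.sup k < nt := by
    rw [Finset.sup_lt_iff (by simpa using (Nat.zero_le _).trans_lt (hk j).2)]
    exact fun b _ => (hk b).2
  omega
end

section
/- There exist two tuples (f^{(1)},…,f^{(s)}) and (g^{(1)},…,g^{(s)}) of linearized polynomials over F_{q^m} with deg_q(f^{(j)}) < k^{(j)} and deg_q(g^{(j)}) < k^{(j)} for all j, differing in at least one component, whose associated codewords V and V' satisfy d_S(V, V') = 2(n_t − max_{1≤j≤s} k^{(j)} + 1). Hence the minimum subspace distance of the interleaved subspace code equals 2(n_t − max_j k^{(j)} + 1). -/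
open Polynomial in
theorem IsLinearized.exists_lin {Fq K : Type*} [Field Fq] [Fintype Fq] [Field K] [Algebra Fq K]
    (q : ℕ) (hq : Fintype.card Fq = q) (P : Polynomial K) (h : IsLinearized q P) :
    ∃ L : K →ₗ[Fq] K, ∀ x, L x = P.eval x := by
  subst hq
  have key : ∀ n ∈ P.support, ∃ L : K →ₗ[Fq] K, ∀ x, L x = P.coeff n * x ^ n := by
    intro n hn
    obtain ⟨i, rfl⟩ := h n (by simpa using hn)
    refine ⟨(P.coeff (Fintype.card Fq ^ i)) •
      ((FiniteField.frobeniusAlgHom Fq K) ^ i).toLinearMap, fun x => ?_⟩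
    have : ∀ i : ℕ, ((FiniteField.frobeniusAlgHom Fq K) ^ i) x = x ^ (Fintype.card Fq ^ i) := by
      intro i
      induction i with
      | zero => simp
      | succ i ih =>
        rw [pow_succ', AlgHom.mul_apply, ih, FiniteField.coe_frobeniusAlgHom]
        simp only [← pow_mul, pow_succ]
    simp [this]
  choose L hL using key
  refine ⟨∑ n ∈ P.support.attach, L n.1 n.2, fun x => ?_⟩
  rw [Polynomial.eval_eq_sum, Polynomial.sum, ← Finset.sum_attach P.support]
  simp only [LinearMap.sum_apply, hL]

/-- distance of two graphs over the span of `α`. -/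
theorem graph_dist {Fq K : Type*} [Field Fq] [Field K] [Algebra Fq K] [FiniteDimensional Fq K]
    (s nt : ℕ) (α : Fin nt → K) (hα : LinearIndependent Fq α) (f g : Fin s → Polynomial K)
    (F G : Fin s → K →ₗ[Fq] K) (hF : ∀ j x, F j x = (f j).eval x)
    (hG : ∀ j x, G j x = (g j).eval x) :
    subspaceDist
          (Submodule.span Fq
            (Set.range fun i : Fin nt =>
              (Fin.cons (α i) (fun j : Fin s => (f j).eval (α i)) : Fin (s + 1) → K)))
          (Submodule.span Fq
            (Set.range fun i : Fin nt =>
              (Fin.cons (α i) (fun j : Fin s => (g j).eval (α i)) : Fin (s + 1) → K)))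
      = 2 * (nt - Module.finrank Fq
        ↥(Submodule.span Fq (Set.range α) ⊓ ⨅ j, LinearMap.ker (F j - G j))) := by
  let Φ : (Fin s → K →ₗ[Fq] K) → K →ₗ[Fq] (Fin (s+1) → K) := fun H =>
    LinearMap.pi (Fin.cons LinearMap.id H)
  have hΦ0 : ∀ H x, Φ H x 0 = x := fun H x => by simp [Φ]
  have hΦs : ∀ H x j, Φ H x (Fin.succ j) = H j x := fun H x j => by simp [Φ]
  have hinj : ∀ H, Function.Injective (Φ H) := fun H x y hxy => by
    rw [← hΦ0 H x, hxy, hΦ0]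
  have hspan : ∀ (f : Fin s → Polynomial K) (F : Fin s → K →ₗ[Fq] K),
      (∀ j x, F j x = (f j).eval x) → (Submodule.span Fq
            (Set.range fun i : Fin nt =>
              (Fin.cons (α i) (fun j : Fin s => (f j).eval (α i)) : Fin (s + 1) → K))) =
      (Submodule.span Fq (Set.range α)).map (Φ F) := by
    intro f F hF
    rw [Submodule.map_span, ← Set.range_comp]
    congr 2
    funext i l
    refine Fin.cases ?_ (fun j => ?_) l
    · simp [hΦ0]
    · simp [hΦs, hF]
  rw [hspan f F hF, hspan g G hG]
  have hA : Module.finrank Fq (Submodule.span Fq (Set.range α)) = nt := by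
    rw [finrank_span_eq_card hα, Fintype.card_fin]
  set A := Submodule.span Fq (Set.range α)
  have hinf : A.map (Φ F) ⊓ A.map (Φ G) = (A ⊓ ⨅ j, LinearMap.ker (F j - G j)).map (Φ F) := by
    ext w
    simp only [Submodule.mem_inf, Submodule.mem_map, Submodule.mem_iInf, LinearMap.mem_ker,
      LinearMap.sub_apply]
    constructor
    · rintro ⟨⟨x, hx, rfl⟩, y, hy, hxy⟩
      have : y = x := by rw [← hΦ0 G y, hxy, hΦ0]
      subst this
      refine ⟨y, ⟨hx, fun j => ?_⟩, rfl⟩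
      rw [← hΦs F, ← hΦs G, hxy, sub_self]
    · rintro ⟨x, ⟨hx, hj⟩, rfl⟩
      refine ⟨⟨x, hx, rfl⟩, x, hx, ?_⟩
      funext l
      refine Fin.cases ?_ (fun j => ?_) l
      · simp [hΦ0]
      · rw [hΦs, hΦs]; exact (sub_eq_zero.mp (hj j)).symm
  have h1 := Submodule.finrank_sup_add_finrank_inf_eq (A.map (Φ F)) (A.map (Φ G))
  have hfr : ∀ H (B : Submodule Fq K), Module.finrank Fq (B.map (Φ H)) = Module.finrank Fq B :=
    fun H B => (LinearEquiv.finrank_eq (Submodule.equivMapOfInjective (Φ H) (hinj H) B)).symm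
  unfold subspaceDist
  rw [hinf] at h1 ⊢
  rw [hfr, hfr, hfr, hA] at h1
  rw [hfr]
  omega

theorem ker_bound {Fq K : Type*} [Field Fq] [Fintype Fq] [Field K] [Algebra Fq K]
    [FiniteDimensional Fq K] (q k : ℕ) (hq : Fintype.card Fq = q) (P : Polynomial K)
    (h : IsLinearized q P) (hP : P ≠ 0) (hd : P.degree < ((q ^ k : ℕ) : WithBot ℕ))
    (B : Submodule Fq K) (hB : ∀ x ∈ B, P.eval x = 0) : Module.finrank Fq B < k := by
  classical
  have hq1 : 1 < q := hq ▸ Fintype.one_lt_card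
  have : Finite K := Module.finite_of_finite Fq
  have := Fintype.ofFinite K
  obtain ⟨i, hi⟩ := h P.natDegree (by simpa using hP)
  rw [Polynomial.degree_eq_natDegree hP, hi] at hd
  have hik : i < k := (Nat.pow_lt_pow_iff_right hq1).1 (by exact_mod_cast hd)
  refine lt_of_le_of_lt ?_ hik
  rw [← Nat.pow_le_pow_iff_right hq1, ← hi, ← hq, ← Module.card_eq_pow_finrank (K := Fq) (V := B)]
  refine le_trans ?_ (Polynomial.card_roots' P)
  refine le_trans ?_ (Multiset.toFinset_card_le _)
  rw [← Fintype.card_coe]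
  refine Fintype.card_le_of_injective
    (fun x : B => (⟨x.1, by simp [hP, hB x.1 x.2]⟩ : P.roots.toFinset)) ?_
  intro x y hxy
  exact Subtype.ext (by simpa using hxy)

theorem exists_vanish {K : Type*} [Field K] (q k : ℕ) (hq : 1 < q) (hk : 1 ≤ k)
    (β : Fin (k - 1) → K) : ∃ P : Polynomial K, IsLinearized q P ∧ P ≠ 0 ∧
      P.degree < ((q ^ k : ℕ) : WithBot ℕ) ∧ ∀ l, P.eval (β l) = 0 := by
  let T : (Fin k → K) →ₗ[K] (Fin (k - 1) → K) :=
    LinearMap.pi fun l => ∑ i : Fin k, (β l ^ (q ^ (i : ℕ))) • LinearMap.proj i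
  have hT : LinearMap.ker T ≠ ⊥ := LinearMap.ker_ne_bot_of_finrank_lt (by simp; omega)
  obtain ⟨c, hc, hc0⟩ := Submodule.exists_mem_ne_zero_of_ne_bot hT
  have hcoef : ∀ n, (∑ i : Fin k, Polynomial.monomial (q ^ (i : ℕ)) (c i)).coeff n =
      ∑ i : Fin k, if q ^ (i : ℕ) = n then c i else 0 := by
    intro n
    simp [Polynomial.finset_sum_coeff, Polynomial.coeff_monomial]
  have hcz : ∀ n, (∑ i : Fin k, Polynomial.monomial (q ^ (i : ℕ)) (c i)).coeff n ≠ 0 →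
      ∃ i : Fin k, q ^ (i : ℕ) = n := by
    intro n hn
    rw [hcoef] at hn
    obtain ⟨i, -, hi⟩ := Finset.exists_ne_zero_of_sum_ne_zero hn
    exact ⟨i, by by_contra h; simp [h] at hi⟩
  refine ⟨∑ i : Fin k, Polynomial.monomial (q ^ (i : ℕ)) (c i), ?_, ?_, ?_, ?_⟩
  · intro n hn
    obtain ⟨i, hi⟩ := hcz n hn
    exact ⟨i, hi.symm⟩
  · intro h0
    apply hc0
    funext j
    have := hcoef (q ^ (j : ℕ))
    rw [h0] at this
    simp only [Nat.pow_right_inj hq, Fin.val_inj] at this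
    simpa using this.symm
  · rw [Polynomial.degree_lt_iff_coeff_zero]
    intro n hn
    by_contra h
    obtain ⟨i, hi⟩ := hcz n h
    have := Nat.pow_lt_pow_right hq i.2
    omega
  · intro l
    have := congrFun (LinearMap.mem_ker.1 hc) l
    simp only [T, LinearMap.pi_apply, LinearMap.sum_apply, LinearMap.smul_apply,
      LinearMap.proj_apply, smul_eq_mul, Pi.zero_apply] at this
    simp only [Polynomial.eval_finset_sum, Polynomial.eval_monomial]
    rw [← this]
    exact Finset.sum_congr rfl fun i _ => mul_comm _ _

/-- There exist two tuples of message polynomials, differing in at least one component,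
whose codewords are at subspace distance exactly `2(n_t − max_j k⁽ʲ⁾ + 1)`; hence the
minimum subspace distance of the interleaved subspace code equals this value. -/
theorem minimum_subspace_distance_interleaved
    (Fq K : Type*) [Field Fq] [Fintype Fq] [Field K] [Algebra Fq K]
    (q m s nt : ℕ) (hq : Fintype.card Fq = q) (hm : 0 < m)
    (hK : Module.finrank Fq K = m) (hnt : nt ≤ m) (hs : 1 ≤ s)
    (α : Fin nt → K) (hα : LinearIndependent Fq α)
    (k : Fin s → ℕ) (hk : ∀ j, 1 ≤ k j ∧ k j < nt) :
    IsLeast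
      {d : ℕ | ∃ f g : Fin s → Polynomial K,
        (∀ j, IsLinearized q (f j)) ∧ (∀ j, IsLinearized q (g j)) ∧
        (∀ j, (f j).degree < ((q ^ k j : ℕ) : WithBot ℕ)) ∧
        (∀ j, (g j).degree < ((q ^ k j : ℕ) : WithBot ℕ)) ∧
        f ≠ g ∧
        d = subspaceDist
          (Submodule.span Fq
            (Set.range fun i : Fin nt =>
              (Fin.cons (α i) (fun j : Fin s => (f j).eval (α i)) : Fin (s + 1) → K)))
          (Submodule.span Fq
            (Set.range fun i : Fin nt =>
              (Fin.cons (α i) (fun j : Fin s => (g j).eval (α i)) : Fin (s + 1) → K)))}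
      (2 * (nt - Finset.univ.sup k + 1)) := by
  have hfd : FiniteDimensional Fq K := FiniteDimensional.of_finrank_pos (by omega)
  have hq1 : 1 < q := hq ▸ Fintype.one_lt_card
  have : Nonempty (Fin s) := ⟨⟨0, hs⟩⟩
  have hle : ∀ j, k j ≤ Finset.univ.sup k := fun j => Finset.le_sup (Finset.mem_univ j)
  obtain ⟨j₀, -, hj₀⟩ := Finset.exists_mem_eq_sup Finset.univ Finset.univ_nonempty k
  have hsub : ∀ P Q : Polynomial K, IsLinearized q P → IsLinearized q Q →
      IsLinearized q (P - Q) := by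
    intro P Q hP hQ n hn
    by_cases h : P.coeff n = 0
    · refine hQ n fun h' => hn (by simp [h, h'])
    · exact hP n h
  constructor
  · obtain ⟨P, hPl, hP0, hPd, hPv⟩ := exists_vanish q (k j₀) hq1 (hk j₀).1
      (fun l : Fin (k j₀ - 1) => α ⟨l, by have := hk j₀; have := l.2; omega⟩)
    have hz : IsLinearized q (0 : Polynomial K) := fun n hn => absurd (by simp) hn
    have hfl : ∀ j, IsLinearized q ((Pi.single j₀ P : Fin s → Polynomial K) j) := by
      intro j
      by_cases h : j = j₀
      · subst h; simpa using hPl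
      · simpa [h] using hz
    refine ⟨Pi.single j₀ P, 0, hfl, fun j => hz, ?_, ?_, ?_, ?_⟩
    · intro j
      by_cases h : j = j₀
      · subst h; simpa using hPd
      · simp only [ne_eq, h, not_false_eq_true, Pi.single_eq_of_ne, Polynomial.degree_zero]
        exact WithBot.bot_lt_coe _
    · intro j
      simp only [Pi.zero_apply, Polynomial.degree_zero]
      exact WithBot.bot_lt_coe _
    · simpa using hP0
    · choose F hF using fun j => IsLinearized.exists_lin (Fq := Fq) q hq _ (hfl j)
      rw [graph_dist s nt α hα _ _ F (fun _ => 0) hF (by simp)]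
      have hup : Module.finrank Fq ↥(Submodule.span Fq (Set.range α) ⊓
          ⨅ j, LinearMap.ker (F j - 0)) < k j₀ := by
        refine ker_bound q _ hq P hPl hP0 hPd _ fun x hx => ?_
        have h1 := (Submodule.mem_iInf _).1 hx.2 j₀
        simpa [hF] using h1
      have hlo : k j₀ - 1 ≤ Module.finrank Fq ↥(Submodule.span Fq (Set.range α) ⊓
          ⨅ j, LinearMap.ker (F j - 0)) := by
        let β : Fin (k j₀ - 1) → K :=
          fun l => α ⟨l, by have := hk j₀; have := l.2; omega⟩
        have hβ : LinearIndependent Fq β := hα.comp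
          (fun l : Fin (k j₀ - 1) => (⟨l, by have := hk j₀; have := l.2; omega⟩ : Fin nt))
          (fun a b hab => Fin.ext (by simpa using hab))
        have hc := finrank_span_eq_card hβ
        rw [Fintype.card_fin] at hc
        rw [← hc]
        refine Submodule.finrank_mono (Submodule.span_le.2 ?_)
        rintro _ ⟨l, rfl⟩
        refine ⟨Submodule.subset_span ⟨_, rfl⟩, ?_⟩
        refine (Submodule.mem_iInf _).2 fun j => ?_
        rw [LinearMap.mem_ker, sub_zero, hF]
        by_cases h : j = j₀
        · subst h; simpa using hPv l
        · simp [h]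
      have := hk j₀
      omega
  · rintro d ⟨f, g, hf, hg, hfd', hgd, hne, rfl⟩
    choose F hF using fun j => IsLinearized.exists_lin (Fq := Fq) q hq _ (hf j)
    choose G hG using fun j => IsLinearized.exists_lin (Fq := Fq) q hq _ (hg j)
    rw [graph_dist s nt α hα f g F G hF hG]
    obtain ⟨j, hj⟩ := Function.ne_iff.1 hne
    have hup : Module.finrank Fq ↥(Submodule.span Fq (Set.range α) ⊓
          ⨅ j, LinearMap.ker (F j - G j)) < k j := by
      refine ker_bound q _ hq (f j - g j) (hsub _ _ (hf j) (hg j)) (sub_ne_zero.2 hj)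
        (lt_of_le_of_lt (Polynomial.degree_sub_le _ _) (max_lt (hfd' j) (hgd j))) _ fun x hx => ?_
      have h1 := (Submodule.mem_iInf _).1 hx.2 j
      simpa [hF, hG] using h1
    have := hle j
    have := hk j₀
    omega
end

section
/- Let s ≥ 1, n_r ≥ 1, k ≥ 1 and τ ≥ 0 be integers with (s+1)·τ < s·(n_r − k + 1), and let (x_i, r_i^{(1)}, …, r_i^{(s)}) ∈ F_{q^m}^{s+1} for 0 ≤ i < n_r be arbitrary. Then there exist linearized polynomials Q_0, Q_1, …, Q_s over F_{q^m}, not all zero, with deg_q(Q_0) < n_r − τ and deg_q(Q_j) < n_r − τ − (k − 1) for 1 ≤ j ≤ s, such that Q_0(x_i) + Q_1(r_i^{(1)}) + ⋯ + Q_s(r_i^{(s)}) = 0 for every i with 0 ≤ i < n_r. -/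
open Polynomial in
/-- The linearized polynomial with given coefficient vector. -/
noncomputable def linPoly {K : Type*} [Field K] (q d : ℕ) : (Fin d → K) →ₗ[K] Polynomial K :=
  ∑ i : Fin d, (Polynomial.monomial (q ^ (i : ℕ))).comp (LinearMap.proj i)

theorem linPoly_apply {K : Type*} [Field K] (q d : ℕ) (c : Fin d → K) :
    linPoly q d c = ∑ i : Fin d, Polynomial.monomial (q ^ (i : ℕ)) (c i) := by
  simp [linPoly]

theorem linPoly_isLinearized {K : Type*} [Field K] (q d : ℕ) (c : Fin d → K) :
    IsLinearized q (linPoly q d c) := by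
  intro n hn
  rw [linPoly_apply, Polynomial.finsetSum_coeff] at hn
  obtain ⟨i, -, hi⟩ := Finset.exists_ne_zero_of_sum_ne_zero hn
  rw [Polynomial.coeff_monomial] at hi
  refine ⟨i, ?_⟩
  by_contra h
  exact hi (if_neg (fun h' => h h'.symm))

theorem linPoly_degree {K : Type*} [Field K] (q d : ℕ) (hq : 1 < q) (c : Fin d → K) :
    (linPoly q d c).degree < ((q ^ d : ℕ) : WithBot ℕ) := by
  rw [Polynomial.degree_lt_iff_coeff_zero]
  intro n hn
  rw [linPoly_apply, Polynomial.finsetSum_coeff]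
  refine Finset.sum_eq_zero fun i _ => ?_
  rw [Polynomial.coeff_monomial]
  have := Nat.pow_lt_pow_right hq i.2
  exact if_neg (by omega)

theorem linPoly_coeff {K : Type*} [Field K] (q d : ℕ) (hq : 1 < q) (c : Fin d → K) (j : Fin d) :
    (linPoly q d c).coeff (q ^ (j : ℕ)) = c j := by
  rw [linPoly_apply, Polynomial.finsetSum_coeff]
  simp only [Polynomial.coeff_monomial]
  rw [Finset.sum_eq_single j]
  · simp
  · intro i _ hij
    exact if_neg fun h => hij (Fin.ext (Nat.pow_right_injective hq h))
  · simp

theorem linPoly_eq_zero {K : Type*} [Field K] (q d : ℕ) (hq : 1 < q) (c : Fin d → K)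
    (h : linPoly q d c = 0) : c = 0 := by
  funext j
  rw [← linPoly_coeff q d hq c j, h]
  simp

/-- Existence of a nonzero solution to the interpolation problem: if
`(s+1)·τ < s·(n_r − k + 1)`, then there are linearized polynomials
`Q₀, Q₁, …, Q_s`, not all zero, with `deg_q Q₀ < n_r − τ` and
`deg_q Q_j < n_r − τ − (k−1)`, vanishing on all received points. -/
theorem exists_interpolation_polynomial
    (K : Type*) [Field K] [Fintype K]
    (q m : ℕ) (hq : IsPrimePow q) (hm : 0 < m) (hcard : Fintype.card K = q ^ m)
    (s nr k τ : ℕ) (hs : 1 ≤ s) (hnr : 1 ≤ nr) (hk : 1 ≤ k)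
    (hτ : ((s : ℤ) + 1) * τ < s * ((nr : ℤ) - k + 1))
    (x : Fin nr → K) (r : Fin nr → Fin s → K) :
    ∃ (Q₀ : Polynomial K) (Q : Fin s → Polynomial K),
      ¬(Q₀ = 0 ∧ ∀ j, Q j = 0) ∧
      IsLinearized q Q₀ ∧ (∀ j, IsLinearized q (Q j)) ∧
      Q₀.degree < ((q ^ (nr - τ) : ℕ) : WithBot ℕ) ∧
      (∀ j, (Q j).degree < ((q ^ (nr - τ - (k - 1)) : ℕ) : WithBot ℕ)) ∧
      ∀ i : Fin nr, Q₀.eval (x i) + ∑ j : Fin s, (Q j).eval (r i j) = 0 := by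
  have hq1 : 1 < q := hq.one_lt
  have hs' : (1 : ℤ) ≤ s := by exact_mod_cast hs
  have hτ0 : (0 : ℤ) ≤ τ := by positivity
  have h1 : (τ : ℤ) < nr - k + 1 := by nlinarith
  obtain ⟨b, hb⟩ : ∃ b, b = nr - τ - (k - 1) := ⟨_, rfl⟩
  obtain ⟨a, ha⟩ : ∃ a, a = nr - τ := ⟨_, rfl⟩
  have hbZ : (b : ℤ) = nr - τ - k + 1 := by omega
  have haZ : (a : ℤ) = nr - τ := by omega
  have hcount : nr < a + s * b := by
    zify
    rw [hbZ, haZ]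
    nlinarith
  rw [← hb, ← ha]
  let f : ((Fin a → K) × (Fin s → Fin b → K)) →ₗ[K] (Fin nr → K) :=
    LinearMap.pi fun i =>
      ((Polynomial.leval (x i)).comp (linPoly q a)).comp (LinearMap.fst K _ _) +
      ∑ j : Fin s, ((Polynomial.leval (r i j)).comp (linPoly q b)).comp
        ((LinearMap.proj j).comp (LinearMap.snd K _ _))
  have hker : LinearMap.ker f ≠ ⊥ := by
    apply LinearMap.ker_ne_bot_of_finrank_lt
    simpa [Module.finrank_prod, Module.finrank_pi_fintype] using hcount
  obtain ⟨c, hc, hc0⟩ := (Submodule.ne_bot_iff _).1 hker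
  refine ⟨linPoly q a c.1, fun j => linPoly q b (c.2 j), ?_, linPoly_isLinearized q a _,
    fun j => linPoly_isLinearized q b _, linPoly_degree q a hq1 _,
    fun j => linPoly_degree q b hq1 _, ?_⟩
  · rintro ⟨h0, h⟩
    apply hc0
    ext1
    · exact linPoly_eq_zero q a hq1 _ h0
    · funext j
      exact linPoly_eq_zero q b hq1 _ (h j)
  · intro i
    have := congrFun (LinearMap.mem_ker.1 hc) i
    simpa [f] using this
end

section
/- Let s ≥ 1, k ≥ 1, and let D, t be integers with 1 ≤ D ≤ t ≤ m. Let x_0, …, x_{t−1} ∈ F_{q^m} be linearly independent over F_q, and let f^{(1)}, …, f^{(s)} be linearized polynomials over F_{q^m} with deg_q(f^{(j)}) < k. Suppose Q_0, Q_1, …, Q_s are linearized polynomials over F_{q^m} with deg_q(Q_0) < D and deg_q(Q_j) < D − (k − 1) for 1 ≤ j ≤ s, satisfying Q_0(x_i) + Σ_{j=1}^{s} Q_j(f^{(j)}(x_i)) = 0 for all 0 ≤ i < t. Then P(x) := Q_0(x) + Σ_{j=1}^{s} (Q_j ∘ f^{(j)})(x), where ∘ denotes polynomial composition (substitution of f^{(j)}(x)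 into Q_j), is the zero polynomial, i.e., all of its coefficients vanish. -/
lemma lin_exists {Fq K : Type*} [Field Fq] [Fintype Fq] [Field K] [Algebra Fq K]
    (P : Polynomial K) (h : IsLinearized (Fintype.card Fq) P) :
    ∃ L : K →ₗ[Fq] K, ∀ a, L a = P.eval a := by
  have key : ∀ n ∈ P.support, ∃ L : K →ₗ[Fq] K, ∀ a, L a = P.coeff n * a ^ n := by
    intro n hn
    obtain ⟨i, rfl⟩ := h n (Polynomial.mem_support_iff.mp hn)
    refine ⟨(LinearMap.mulLeft Fq (P.coeff (Fintype.card Fq ^ i))).comp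
      ((FiniteField.frobeniusAlgHom Fq K) ^ i).toLinearMap, fun a => ?_⟩
    have : ∀ i : ℕ, ((FiniteField.frobeniusAlgHom Fq K) ^ i) a = a ^ (Fintype.card Fq ^ i) := by
      intro i
      induction i with
      | zero => simp
      | succ i ih => rw [pow_succ', AlgHom.mul_apply, ih, FiniteField.coe_frobeniusAlgHom, pow_succ, pow_mul]
    exact congrArg (fun z => P.coeff (Fintype.card Fq ^ i) * z) (this i)
  choose! L hL using key
  refine ⟨∑ n ∈ P.support, L n, fun a => ?_⟩
  rw [Polynomial.eval_eq_sum, Polynomial.sum, LinearMap.sum_apply]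
  exact Finset.sum_congr rfl fun n hn => hL n hn a

lemma lin_natDegree {q : ℕ} (hq : 2 ≤ q) {K : Type*} [Field K]
    (P : Polynomial K) (h : IsLinearized q P) (hP : P ≠ 0) (d : ℕ)
    (hd : P.degree < ((q ^ d : ℕ) : WithBot ℕ)) : 1 ≤ d ∧ P.natDegree ≤ q ^ (d - 1) := by
  obtain ⟨i, hi⟩ := h P.natDegree (by simpa using hP)
  rw [Polynomial.degree_eq_natDegree hP] at hd
  have hd' : P.natDegree < q ^ d := by exact_mod_cast hd
  rw [hi] at hd' ⊢
  have := (Nat.pow_lt_pow_iff_right (by omega)).mp hd'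
  exact ⟨by omega, Nat.pow_le_pow_right (by omega) (by omega)⟩

/-- If the interpolation polynomial vanishes on `t ≥ D` linearly independent points
evaluated at the message polynomials, then
`P(x) = Q₀(x) + Σ_j (Q_j ∘ f⁽ʲ⁾)(x)` is the zero polynomial. -/
theorem interpolation_poly_comp_eq_zero
    (Fq K : Type*) [Field Fq] [Fintype Fq] [Field K] [Algebra Fq K]
    (q m : ℕ) (hq : Fintype.card Fq = q) (hm : 0 < m) (hK : Module.finrank Fq K = m)
    (s k D t : ℕ) (hs : 1 ≤ s) (hk : 1 ≤ k) (hD : 1 ≤ D) (hDt : D ≤ t) (htm : t ≤ m)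
    (x : Fin t → K) (hx : LinearIndependent Fq x)
    (f : Fin s → Polynomial K)
    (hfl : ∀ j, IsLinearized q (f j))
    (hfd : ∀ j, (f j).degree < ((q ^ k : ℕ) : WithBot ℕ))
    (Q₀ : Polynomial K) (Q : Fin s → Polynomial K)
    (hQ₀l : IsLinearized q Q₀) (hQl : ∀ j, IsLinearized q (Q j))
    (hQ₀d : Q₀.degree < ((q ^ D : ℕ) : WithBot ℕ))
    (hQd : ∀ j, (Q j).degree < ((q ^ (D - (k - 1)) : ℕ) : WithBot ℕ))
    (heval : ∀ i : Fin t,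
      Q₀.eval (x i) + ∑ j : Fin s, (Q j).eval ((f j).eval (x i)) = 0) :
    Q₀ + ∑ j : Fin s, (Q j).comp (f j) = 0 := by
  subst hq
  have hq2 : 2 ≤ Fintype.card Fq := Fintype.one_lt_card
  obtain ⟨L₀, hL₀⟩ := lin_exists Q₀ hQ₀l
  choose L hL using fun j => lin_exists (Q j) (hQl j)
  choose M hM using fun j => lin_exists (f j) (hfl j)
  have hT : ∀ a, (L₀ + ∑ j, (L j).comp (M j)) a
      = (Q₀ + ∑ j : Fin s, (Q j).comp (f j)).eval a := by
    intro a
    simp [hL₀, hL, hM, Polynomial.eval_finsetSum]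
  refine Polynomial.eq_zero_of_natDegree_lt_card_of_eval_eq_zero _
    (f := fun c : Fin t → Fq => ∑ i, c i • x i) ?_ ?_ ?_
  · exact hx.fintypeLinearCombination_injective
  · intro c
    rw [← hT, map_sum]
    refine Finset.sum_eq_zero fun i _ => ?_
    rw [map_smul, hT]
    simp [Polynomial.eval_finsetSum, heval]
  · have hpos : 0 < Fintype.card Fq := by omega
    have hdeg : (Q₀ + ∑ j : Fin s, (Q j).comp (f j)).natDegree ≤ Fintype.card Fq ^ (D - 1) := by
      refine Polynomial.natDegree_add_le_of_degree_le ?_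
        (Polynomial.natDegree_sum_le_of_forall_le _ _ fun j _ => ?_)
      · by_cases h0 : Q₀ = 0
        · simp [h0]
        · exact (lin_natDegree hq2 _ hQ₀l h0 _ hQ₀d).2
      · rw [Polynomial.natDegree_comp]
        by_cases h0 : Q j = 0
        · simp [h0]
        by_cases h1 : f j = 0
        · simp [h1]
        obtain ⟨a, b⟩ := lin_natDegree hq2 _ (hQl j) h0 _ (hQd j)
        obtain ⟨_, d⟩ := lin_natDegree hq2 _ (hfl j) h1 _ (hfd j)
        refine (Nat.mul_le_mul b d).trans ?_
        rw [← pow_add]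
        exact Nat.pow_le_pow_right hpos (by omega)
    refine hdeg.trans_lt ?_
    rw [Fintype.card_fun, Fintype.card_fin]
    exact Nat.pow_lt_pow_right (by omega) (by omega)
end

section
/- Let s ≥ 1, and let n_r, τ, k, γ be integers with 1 ≤ k ≤ n_r − τ and 0 ≤ γ ≤ n_r. Let x_i, r_i^{(1)}, …, r_i^{(s)} ∈ F_{q^m} for 0 ≤ i < n_r, and let R be the n_r × ((n_r−τ) + s(n_r−τ−k+1)) matrix over F_{q^m} whose i-th row is ( x_i^{q^0}, …, x_i^{q^{n_r−τ−1}}, (r_i^{(1)})^{q^0}, …, (r_i^{(1)})^{q^{n_r−τ−k}}, …, (r_i^{(s)})^{q^0}, …, (r_i^{(s)})^{q^{n_r−τ−k}} ). If there exist linearized polynomials f^{(1)},…,f^{(s)} over F_{q^m} with deg_q(f^{(j)}) < k such that r_i^{(j)} = f^{(j)}(x_i) for all 0 ≤ i < n_r − γ and all 1 ≤ j ≤ s, then rank(R) ≤ (n_r − τ) + γ, the rank taken over F_{q^m}. -/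
theorem matrix_rank_add_le_aux {K ι κ : Type*} [Field K] [Fintype ι] [Fintype κ]
    (A B : Matrix ι κ K) : (A + B).rank ≤ A.rank + B.rank := by
  unfold Matrix.rank
  refine le_trans (Submodule.finrank_mono ?_) (Submodule.finrank_add_le_finrank_add_finrank
    (LinearMap.range A.mulVecLin) (LinearMap.range B.mulVecLin))
  rintro _ ⟨v, rfl⟩
  rw [Matrix.mulVecLin_add, LinearMap.add_apply]
  exact Submodule.add_mem_sup ⟨v, rfl⟩ ⟨v, rfl⟩

theorem eval_linearized_aux {K : Type*} [Field K] (q : ℕ) (hq : 1 < q) (f : Polynomial K)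
    (hf : IsLinearized q f) (M : ℕ) (hd : f.degree < ((q ^ M : ℕ) : WithBot ℕ)) (y : K) :
    f.eval y = ∑ l ∈ Finset.range M, f.coeff (q ^ l) * y ^ q ^ l := by
  rw [Polynomial.eval_eq_sum, Polynomial.sum_def]
  symm
  rw [← Finset.sum_image (s := Finset.range M) (g := fun l => q ^ l)
    (f := fun n => f.coeff n * y ^ n) (fun a _ b _ h => Nat.pow_right_injective hq h)]
  symm
  apply Finset.sum_subset
  · intro n hn
    have hn' := Polynomial.mem_support_iff.1 hn
    obtain ⟨l, rfl⟩ := hf n hn'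
    refine Finset.mem_image.2 ⟨l, Finset.mem_range.2 ?_, rfl⟩
    have h1 := lt_of_le_of_lt (Polynomial.le_degree_of_ne_zero hn') hd
    exact (Nat.pow_lt_pow_iff_right hq).1 (by exact_mod_cast h1)
  · intro n _ hn
    simp [Polynomial.notMem_support_iff.1 hn]

theorem pow_eval_aux {K : Type*} [Field K] [Fintype K] (q m : ℕ) (hq : IsPrimePow q)
    (hcard : Fintype.card K = q ^ m) (hm : 0 < m) (f : Polynomial K)
    (hf : IsLinearized q f) (k b N : ℕ) (hN : b + k ≤ N)
    (hd : f.degree < ((q ^ k : ℕ) : WithBot ℕ)) (y : K) :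
    f.eval y ^ q ^ b = ∑ a : Fin N, y ^ q ^ (a : ℕ) *
      (if b ≤ (a : ℕ) then f.coeff (q ^ ((a : ℕ) - b)) ^ q ^ b else 0) := by
  have hq1 : 1 < q := hq.one_lt
  obtain ⟨M, rfl⟩ : ∃ M, N = b + M := ⟨N - b, by omega⟩
  have hd' : f.degree < ((q ^ M : ℕ) : WithBot ℕ) := lt_of_lt_of_le hd (by
    exact_mod_cast Nat.pow_le_pow_right hq1.le (by omega))
  rw [eval_linearized_aux q hq1 f hf M hd' y,
    Fin.sum_univ_eq_sum_range (fun a => y ^ q ^ a *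
      (if b ≤ a then f.coeff (q ^ (a - b)) ^ q ^ b else 0)) (b + M), Finset.sum_range_add]
  rw [Finset.sum_eq_zero (s := Finset.range b), zero_add]
  · obtain ⟨p, e, hp, he, rfl⟩ := (isPrimePow_nat_iff q).1 hq
    have : Fact p.Prime := ⟨hp⟩
    have : CharP K p := by
      obtain ⟨p', hp'⟩ := CharP.exists K
      obtain ⟨n, hpp, hn⟩ := FiniteField.card K p'
      have h1 : p ∣ p' ^ (n : ℕ) := by
        rw [← hn, hcard]
        exact dvd_pow (dvd_pow_self p he.ne') hm.ne'
      have h2 := (Nat.prime_dvd_prime_iff_eq hp hpp).1 (hp.dvd_of_dvd_pow h1)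
      rwa [h2]
    rw [← pow_mul p e b, sum_pow_char_pow]
    refine Finset.sum_congr rfl fun l _ => ?_
    simp only [Nat.le_add_right, if_true, Nat.add_sub_cancel_left]
    rw [mul_pow, mul_comm, ← pow_mul, pow_mul p e b, ← pow_add, add_comm l b]
  · intro a ha
    rw [if_neg (by simpa using ha), mul_zero]

/-- Rank of the interpolation matrix: if the first `n_r − γ` received points agree
with evaluations of message polynomials of q-degree `< k`, then the interpolation
matrix `R` has rank at most `(n_r − τ) + γ`. -/
theorem rank_interpolation_matrix_le
    (K : Type*) [Field K] [Fintype K]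
    (q m : ℕ) (hq : IsPrimePow q) (hm : 0 < m) (hcard : Fintype.card K = q ^ m)
    (s nr τ k γ : ℕ) (hs : 1 ≤ s) (hk : 1 ≤ k) (hkτ : k + τ ≤ nr) (hγ : γ ≤ nr)
    (x : Fin nr → K) (r : Fin nr → Fin s → K)
    (f : Fin s → Polynomial K)
    (hfl : ∀ j, IsLinearized q (f j))
    (hfd : ∀ j, (f j).degree < ((q ^ k : ℕ) : WithBot ℕ))
    (hagree : ∀ i : Fin nr, (i : ℕ) < nr - γ → ∀ j, r i j = (f j).eval (x i)) :
    (Matrix.of fun (i : Fin nr) (c : Fin (nr - τ) ⊕ Fin s × Fin (nr - τ - k + 1)) =>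
      Sum.elim (fun a : Fin (nr - τ) => x i ^ q ^ (a : ℕ)) (fun p : Fin s × Fin (nr - τ - k + 1) => r i p.1 ^ q ^ (p.2 : ℕ)) c).rank
      ≤ (nr - τ) + γ := by
  classical
  set R : Matrix (Fin nr) (Fin (nr - τ) ⊕ Fin s × Fin (nr - τ - k + 1)) K :=
    Matrix.of fun i c => Sum.elim (fun a : Fin (nr - τ) => x i ^ q ^ (a : ℕ))
      (fun p : Fin s × Fin (nr - τ - k + 1) => r i p.1 ^ q ^ (p.2 : ℕ)) c with hR
  let A : Matrix (Fin nr) (Fin (nr - τ)) K := Matrix.of fun i a => x i ^ q ^ (a : ℕ)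
  let B : Matrix (Fin (nr - τ)) (Fin (nr - τ) ⊕ Fin s × Fin (nr - τ - k + 1)) K :=
    Matrix.of fun a c => Sum.elim (fun a' => if a = a' then 1 else 0)
      (fun p => if (p.2 : ℕ) ≤ (a : ℕ) then
        (f p.1).coeff (q ^ ((a : ℕ) - (p.2 : ℕ))) ^ q ^ (p.2 : ℕ) else 0) c
  let w : Fin nr → K := fun i => if (i : ℕ) < nr - γ then 0 else 1
  have key : R = A * B + Matrix.diagonal w * (R - A * B) := by
    ext i c
    rw [Matrix.add_apply, Matrix.diagonal_mul, Matrix.sub_apply]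
    by_cases hi : (i : ℕ) < nr - γ
    · simp only [w, hi, if_true, zero_mul, add_zero]
      rw [Matrix.mul_apply]
      rcases c with a | ⟨j, b⟩
      · simp [R, A, B]
      · simp only [R, A, B, Matrix.of_apply, Sum.elim_inr]
        rw [hagree i hi j]
        exact pow_eval_aux q m hq hcard hm (f j) (hfl j) k b (nr - τ) (by omega) (hfd j) (x i)
    · simp [w, hi]
  have h1 : (A * B).rank ≤ nr - τ := (Matrix.rank_mul_le_left A B).trans (Matrix.rank_le_width A)
  have h2 : (Matrix.diagonal w).rank ≤ γ := by
    rw [Matrix.rank_diagonal, Fintype.card_subtype]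
    have : (Finset.univ.filter fun i => w i ≠ 0).card ≤ (Finset.Ico (nr - γ) nr).card := by
      apply Finset.card_le_card_of_injOn (fun i : Fin nr => (i : ℕ))
      · intro i hi
        have : ¬ (i : ℕ) < nr - γ := by simpa [w] using hi
        simp only [Finset.coe_Ico, Set.mem_Ico]
        exact ⟨by omega, i.2⟩
      · exact fun a _ b _ h => Fin.ext h
    rw [Nat.card_Ico] at this
    omega
  rw [key]
  exact (matrix_rank_add_le_aux _ _).trans
    (add_le_add h1 ((Matrix.rank_mul_le_left _ _).trans h2))
end

section
/- Let s ≥ 1 and let n_t, k, δ, γ, τ be integers with n_r := n_t − δ + γ, 1 ≤ k ≤ n_r − τ, 0 ≤ γ ≤ min(τ, n_r), and let R be the n_r × ((n_r−τ) + s(n_r−τ−k+1)) matrix over F_{q^m} whose i-th row is ( x_i^{q^0}, …, x_i^{q^{n_r−τ−1}}, (r_i^{(1)})^{q^0}, …, (r_i^{(1)})^{q^{n_r−τ−k}}, …, (r_i^{(s)})^{q^0}, …, (r_i^{(s)})^{q^{n_r−τ−k}} ), where r_i^{(j)} = f^{(j)}(x_i) for all 0 ≤ i < n_r − γ and all j,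 for some linearized polynomials f^{(j)} of q-degree < k. Then the dimension over F_{q^m} of the right kernel { v : R·v = 0 } is at least s(n_t − k − δ − τ + 1) + (s−1)γ. -/
theorem aux_frob (K : Type*) [Field K] [Fintype K]
    (q m : ℕ) (hq : IsPrimePow q) (hm : 0 < m) (hcard : Fintype.card K = q ^ m)
    (k N b : ℕ) (hb : b + k ≤ N) (f : Polynomial K) (hfl : IsLinearized q f)
    (hfd : f.degree < ((q ^ k : ℕ) : WithBot ℕ)) :
    ∃ t : Fin N → K, ∀ y : K, f.eval y ^ q ^ b = ∑ a, t a * y ^ q ^ (a : ℕ) := by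
  have hq1 : 1 < q := hq.one_lt
  obtain ⟨p, e, hp, he, rfl⟩ := hq
  have hp' : p.Prime := hp.nat_prime
  have := Fact.mk hp'
  obtain ⟨p', hcp⟩ := CharP.exists K
  obtain ⟨n, hp2, hc2⟩ := FiniteField.card K p'
  have hpp : p' = p := by
    have h1 : p' ∣ (p ^ e) ^ m := by
      rw [← hcard, hc2]; exact dvd_pow_self _ n.pos.ne'
    exact (Nat.prime_dvd_prime_iff_eq hp2 hp').1 (hp2.dvd_of_dvd_pow (hp2.dvd_of_dvd_pow h1))
  subst hpp
  have key : (fun y : K => f.eval y ^ (p' ^ e) ^ b) ∈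
      Submodule.span K (Set.range fun a : Fin N => fun y : K => y ^ (p' ^ e) ^ (a : ℕ)) := by
    have hnd : f.natDegree < (p' ^ e) ^ k := by
      by_cases h0 : f = 0
      · subst h0
        simp only [Polynomial.natDegree_zero]
        positivity
      · exact (Polynomial.natDegree_lt_iff_degree_lt h0).2 hfd
    have heq : (fun y : K => f.eval y ^ (p' ^ e) ^ b) =
        ∑ n ∈ Finset.range ((p' ^ e) ^ k),
          (fun y : K => (f.coeff n * y ^ n) ^ (p' ^ e) ^ b) := by
      funext y
      rw [Polynomial.eval_eq_sum_range' hnd, Finset.sum_apply, ← pow_mul p' e b, sum_pow_char_pow p']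
    rw [heq]
    refine Submodule.sum_mem _ fun n hn => ?_
    by_cases hc : f.coeff n = 0
    · have : (fun y : K => (f.coeff n * y ^ n) ^ (p' ^ e) ^ b) = 0 := by
        funext y
        have : (p' ^ e) ^ b ≠ 0 := by positivity
        simp [hc, hp'.ne_zero]
      rw [this]
      exact Submodule.zero_mem _
    · obtain ⟨i, rfl⟩ := hfl n hc
      have hi : i < k := (Nat.pow_lt_pow_iff_right hq1).1 (Finset.mem_range.1 hn)
      have : (fun y : K => (f.coeff ((p' ^ e) ^ i) * y ^ (p' ^ e) ^ i) ^ (p' ^ e) ^ b) =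
          (f.coeff ((p' ^ e) ^ i)) ^ (p' ^ e) ^ b • fun y : K => y ^ (p' ^ e) ^ (i + b) := by
        funext y
        simp only [Pi.smul_apply, smul_eq_mul]
        rw [mul_pow, ← pow_mul y, ← pow_add]
      rw [this]
      exact Submodule.smul_mem _ _ (Submodule.subset_span ⟨⟨i + b, by omega⟩, rfl⟩)
  obtain ⟨t, ht⟩ := (Submodule.mem_span_range_iff_exists_fun K).1 key
  refine ⟨t, fun y => ?_⟩
  have := congrFun ht y
  simpa [Finset.sum_apply] using this.symm

theorem aux_dim {K : Type*} [Field K] {n g : ℕ} {A B : Type*} [Fintype A] [Fintype B]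
    (hg : g ≤ n) (R : Matrix (Fin n) (A ⊕ B) K) (t : B → A → K)
    (h : ∀ i : Fin n, (i : ℕ) < n - g → ∀ b, R i (.inr b) = ∑ a, t b a * R i (.inl a)) :
    Fintype.card B ≤ Module.finrank K (LinearMap.ker R.mulVecLin) + g := by
  let L : (B → K) →ₗ[K] (A ⊕ B → K) :=
    { toFun := fun w => Sum.elim (fun a => - ∑ b, w b * t b a) w
      map_add' := by
        intro u v
        funext c
        rcases c with a | b
        · simp [add_mul, Finset.sum_add_distrib, add_comm]
        · simp
      map_smul' := by
        intro u v
        funext c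
        rcases c with a | b
        · simp [mul_assoc, Finset.mul_sum]
        · simp }
  have hL : Function.Injective L := by
    intro u v huv
    funext b
    exact congrFun huv (.inr b)
  let P : (Fin n → K) →ₗ[K] (Fin g → K) :=
    LinearMap.funLeft K K (fun i : Fin g => (⟨n - g + i, by omega⟩ : Fin n))
  let Ψ := P ∘ₗ R.mulVecLin ∘ₗ L
  have h1 := LinearMap.finrank_range_add_finrank_ker Ψ
  have h2 : Module.finrank K (LinearMap.range Ψ) ≤ g := by
    simpa using Submodule.finrank_le (LinearMap.range Ψ)
  have h3 : (LinearMap.ker Ψ).map L ≤ LinearMap.ker R.mulVecLin := by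
    rintro _ ⟨w, hw, rfl⟩
    rw [LinearMap.mem_ker]
    funext i
    by_cases hi : (i : ℕ) < n - g
    · have e : R.mulVecLin (L w) i =
          ∑ a, R i (.inl a) * (- ∑ b, w b * t b a) + ∑ b, R i (.inr b) * w b := by
        simp [L, Matrix.mulVec, dotProduct]
      rw [e]
      simp only [h i hi, Finset.sum_mul, Finset.mul_sum, mul_neg, Finset.sum_neg_distrib]
      rw [Finset.sum_comm, Pi.zero_apply, neg_add_eq_zero]
      exact Finset.sum_congr rfl fun b _ => Finset.sum_congr rfl fun a _ => by ring
    · have := congrFun (LinearMap.mem_ker.1 hw) ⟨i - (n - g), by omega⟩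
      have e : (⟨n - g + ((i : ℕ) - (n - g)), by omega⟩ : Fin n) = i := by
        ext
        simp only
        omega
      simpa [Ψ, P, LinearMap.funLeft_apply, e] using this
  have h4 := Submodule.finrank_mono h3
  rw [← (Submodule.equivMapOfInjective L hL (LinearMap.ker Ψ)).finrank_eq] at h4
  simp at h1
  omega

/-- Dimension of the solution space of the interpolation problem: the right kernel
of the interpolation matrix `R` has dimension at least
`s(n_t − k − δ − τ + 1) + (s−1)γ`. -/
theorem finrank_ker_interpolation_matrix_ge
    (K : Type*) [Field K] [Fintype K]
    (q m : ℕ) (hq : IsPrimePow q) (hm : 0 < m) (hcard : Fintype.card K = q ^ m)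
    (s nt k δ γ τ nr : ℕ) (hs : 1 ≤ s) (hδ : δ ≤ nt) (hnr : nr = nt - δ + γ)
    (hk : 1 ≤ k) (hkτ : k + τ ≤ nr) (hγτ : γ ≤ τ) (hγnr : γ ≤ nr)
    (x : Fin nr → K) (r : Fin nr → Fin s → K)
    (f : Fin s → Polynomial K)
    (hfl : ∀ j, IsLinearized q (f j))
    (hfd : ∀ j, (f j).degree < ((q ^ k : ℕ) : WithBot ℕ))
    (hagree : ∀ i : Fin nr, (i : ℕ) < nr - γ → ∀ j, r i j = (f j).eval (x i)) :
    (s : ℤ) * ((nt : ℤ) - k - δ - τ + 1) + ((s : ℤ) - 1) * γ ≤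
      (Module.finrank K
        ↥(LinearMap.ker
          (Matrix.mulVecLin
            (Matrix.of fun (i : Fin nr) (c : Fin (nr - τ) ⊕ Fin s × Fin (nr - τ - k + 1)) =>
              Sum.elim (fun a : Fin (nr - τ) => x i ^ q ^ (a : ℕ))
                (fun p : Fin s × Fin (nr - τ - k + 1) => r i p.1 ^ q ^ (p.2 : ℕ)) c))) : ℤ) := by
  have hex : ∀ p : Fin s × Fin (nr - τ - k + 1), ∃ t : Fin (nr - τ) → K, ∀ y : K,
      (f p.1).eval y ^ q ^ (p.2 : ℕ) = ∑ a, t a * y ^ q ^ (a : ℕ) := fun p =>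
    aux_frob K q m hq hm hcard k (nr - τ) p.2 (by have := p.2.2; omega) (f p.1)
      (hfl p.1) (hfd p.1)
  choose t ht using hex
  have main := aux_dim hγnr
    (Matrix.of fun (i : Fin nr) (c : Fin (nr - τ) ⊕ Fin s × Fin (nr - τ - k + 1)) =>
      Sum.elim (fun a : Fin (nr - τ) => x i ^ q ^ (a : ℕ))
        (fun p : Fin s × Fin (nr - τ - k + 1) => r i p.1 ^ q ^ (p.2 : ℕ)) c) t
    (by
      intro i hi p
      simp only [Matrix.of_apply, Sum.elim_inl, Sum.elim_inr]
      rw [hagree i hi, ht])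
  simp only [Fintype.card_prod, Fintype.card_fin] at main
  have main' := (Nat.cast_le (α := ℤ)).2 main
  rw [Nat.cast_add, Nat.cast_mul] at main'
  have hD : ((nr - τ - k + 1 : ℕ) : ℤ) = (nt : ℤ) - k - δ - τ + 1 + γ := by omega
  rw [hD] at main'
  linarith
end

section
/- Let d_I ≥ s ≥ 1, k ≥ 1, and L ≥ k be integers, and let q^{(h)}_{j,ℓ} ∈ F_{q^m} be given for 1 ≤ h ≤ d_I, 1 ≤ j ≤ s, 0 ≤ ℓ ≤ L−k. For each such ℓ let Q_ℓ denote the d_I × s matrix with (h,j) entry q^{(h)}_{j,ℓ}, and for an integer i let Q_ℓ^{[i]} denote the matrix obtained by applying the i-th power of the Frobenius automorphism x ↦ x^q of F_{q^m} entrywise (negative i via the inverse automorphism). Let Q be the (L·d_I) × (s·k) block matrix whose block in block-row a (0 ≤ a < L) and block-column b (0 ≤ b < k) equals Q_{a−b}^{[−a]} if 0 ≤ a−b ≤ L−k, and the zero d_I × s block otherwise. If rank(Q_{L−k}) = s, then rank(Q) = s·k, ranks over F_{q^m}. -/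
/-- If the matrix `Q_{L−k}` of leading coefficients has rank `s`, then the
root-finding block matrix `Q` has full rank `s·k`. -/
theorem rank_root_finding_matrix
    (K : Type*) [Field K] [Fintype K]
    (q m : ℕ) (hq : IsPrimePow q) (hm : 0 < m) (hcard : Fintype.card K = q ^ m)
    (σ : RingAut K) (hσ : ∀ x : K, σ x = x ^ q)
    (dI s k L : ℕ) (hs : 1 ≤ s) (hds : s ≤ dI) (hk : 1 ≤ k) (hL : k ≤ L)
    (qc : Fin dI → Fin s → ℕ → K)
    (hrank : (Matrix.of fun (h : Fin dI) (j : Fin s) => qc h j (L - k)).rank = s) :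
    (Matrix.of fun (p : Fin L × Fin dI) (c : Fin k × Fin s) =>
      if (c.1 : ℕ) ≤ (p.1 : ℕ) ∧ (p.1 : ℕ) - (c.1 : ℕ) ≤ L - k then
        (σ ^ (-((p.1 : ℕ) : ℤ))) (qc p.2 c.2 ((p.1 : ℕ) - (c.1 : ℕ)))
      else 0).rank = s * k := by
  have hinj : ∀ w : Fin s → K,
      (Matrix.of fun (h : Fin dI) (j : Fin s) => qc h j (L - k)).mulVec w = 0 → w = 0 := by
    intro w hw
    set A := (Matrix.of fun (h : Fin dI) (j : Fin s) => qc h j (L - k)) with hA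
    have h1 := LinearMap.finrank_range_add_finrank_ker A.mulVecLin
    have h2 : Module.finrank K (LinearMap.range A.mulVecLin) = s := hrank
    rw [h2, Module.finrank_fin_fun] at h1
    have h3 : Module.finrank K (LinearMap.ker A.mulVecLin) = 0 := by omega
    have h4 := Submodule.finrank_eq_zero.mp h3
    have h5 : w ∈ LinearMap.ker A.mulVecLin := by
      rw [LinearMap.mem_ker, Matrix.mulVecLin_apply]; exact hw
    rw [h4] at h5
    simpa using h5
  rw [Matrix.rank, LinearMap.finrank_range_of_inj]
  · rw [Module.finrank_pi]
    simp [mul_comm]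
  rw [← LinearMap.ker_eq_bot, LinearMap.ker_eq_bot']
  intro v hv
  rw [Matrix.mulVecLin_apply] at hv
  have key : ∀ n : ℕ, ∀ b : Fin k, k - 1 - (b : ℕ) = n → ∀ j, v (b, j) = 0 := by
    intro n
    induction n using Nat.strong_induction_on with
    | _ n ih =>
    intro b hb
    have hbk := b.2
    set τ : RingAut K := σ ^ (-(((b : ℕ) + (L - k) : ℕ) : ℤ)) with hτ
    have hw : (fun j => τ.symm (v (b, j))) = 0 := by
      apply hinj
      funext h
      have h1 := congrFun hv (⟨(b : ℕ) + (L - k), by omega⟩, h)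
      simp only [Matrix.mulVec, dotProduct, Matrix.of_apply, Pi.zero_apply,
        Fintype.sum_prod_type] at h1 ⊢
      rw [Finset.sum_eq_single b] at h1
      · have h2 := congrArg τ.symm h1
        rw [map_zero, map_sum] at h2
        rw [← h2]
        apply Finset.sum_congr rfl
        intro j _
        rw [if_pos (by constructor <;> omega), map_mul, ← hτ, Nat.add_sub_cancel_left]
        congr 1
        exact (RingEquiv.symm_apply_apply τ _).symm
      · intro c _ hc
        apply Finset.sum_eq_zero
        intro j _
        have hck := c.2
        have hcb : (c : ℕ) ≠ b := fun h => hc (Fin.ext h)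
        by_cases hlt : (b : ℕ) < c
        · rw [ih (k - 1 - (c : ℕ)) (by omega) c rfl j, mul_zero]
        · rw [if_neg (by omega), zero_mul]
      · simp
    intro j
    have := congrFun hw j
    simpa using this
  funext ⟨b, j⟩
  exact key _ b rfl j
end

section
/- Let d_I ≥ s ≥ 1, k ≥ 1, L ≥ k be integers, and fix arbitrary elements q^{(h)}_{j,ℓ} ∈ F_{q^m} for 1 ≤ h ≤ d_I, 1 ≤ j ≤ s, 0 ≤ ℓ < L−k. For each matrix B ∈ F_{q^m}^{d_I × s}, set q^{(h)}_{j,L−k} := B_{h,j} and let Q(B) be the (L·d_I) × (s·k) block matrix whose block in block-row a (0 ≤ a < L) and block-column b (0 ≤ b < k) equals Q_{a−b}^{[−a]} if 0 ≤ a−b ≤ L−k and zero otherwise, where Q_ℓ is the d_I × s matrix with entries q^{(h)}_{j,ℓ} and [i] denotes entrywise application of the i-th Frobenius power. Then the number of B ∈ F_{q^m}^{d_I × s} with rank(Q(B)) < s·k is at most 4·q^{m·d_I·s}·q^{−m(d_I+1−s)}; equivalently, for B uniformly random, P(rank(Q(B)) < sk) ≤ 4·q^{−m(d_I+1−s)}.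 -/
lemma aux_exists_vec {K α β : Type*} [Field K] [Fintype α] [Fintype β] (M : Matrix α β K)
    (h : M.rank < Fintype.card β) : ∃ v : β → K, v ≠ 0 ∧ M.mulVec v = 0 := by
  by_contra hcon
  push Not at hcon
  have hinj : Function.Injective M.mulVecLin := by
    rw [injective_iff_map_eq_zero]
    intro v hv
    by_contra hne
    exact hcon v hne (by simpa using hv)
  have := LinearMap.finrank_range_of_inj hinj
  rw [Module.finrank_fintype_fun_eq_card] at this
  unfold Matrix.rank at h
  omega

lemma aux_card_fix {K : Type*} [Field K] [Fintype K] (d s : ℕ) (w : Fin s → K) (hw : w ≠ 0) :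
    Nat.card {B : Matrix (Fin d) (Fin s) K // B.mulVec w = 0}
      ≤ Fintype.card K ^ (d * (s - 1)) := by
  classical
  obtain ⟨i, hi⟩ := Function.ne_iff.mp hw
  have hi : w i ≠ 0 := by simpa using hi
  let f : {B : Matrix (Fin d) (Fin s) K // B.mulVec w = 0} → (Fin d → {j : Fin s // j ≠ i} → K) :=
    fun B h j => B.1 h j.1
  have hf : Function.Injective f := by
    intro B C hBC
    have hne : ∀ h j, j ≠ i → B.1 h j = C.1 h j := fun h j hj =>
      congrFun (congrFun hBC h) ⟨j, hj⟩
    apply Subtype.ext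
    ext h j
    by_cases hj : j = i
    · subst hj
      have h1 := congrFun B.2 h
      have h2 := congrFun C.2 h
      simp only [Matrix.mulVec, dotProduct, Pi.zero_apply] at h1 h2
      rw [← Finset.add_sum_erase _ _ (Finset.mem_univ j)] at h1 h2
      have h3 : ∑ x ∈ Finset.univ.erase j, B.1 h x * w x
          = ∑ x ∈ Finset.univ.erase j, C.1 h x * w x :=
        Finset.sum_congr rfl fun x hx => by rw [hne h x (Finset.ne_of_mem_erase hx)]
      rw [h3] at h1
      exact mul_right_cancel₀ hi (add_right_cancel (h1.trans h2.symm))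
    · exact hne h j hj
  have h := Nat.card_le_card_of_injective f hf
  refine h.trans (le_of_eq ?_)
  rw [Nat.card_eq_fintype_card]
  simp only [Fintype.card_fun, Fintype.card_fin, Fintype.card_subtype_compl,
    Fintype.card_subtype_eq]
  rw [← pow_mul, mul_comm]

lemma aux_card_bad {K : Type*} [Field K] [Fintype K] (d s : ℕ) :
    Nat.card {B : Matrix (Fin d) (Fin s) K // ∃ w, w ≠ 0 ∧ B.mulVec w = 0}
      * (Fintype.card K - 1) ≤ Fintype.card K ^ s * Fintype.card K ^ (d * (s - 1)) := by
  classical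
  let Bad := {B : Matrix (Fin d) (Fin s) K // ∃ w, w ≠ 0 ∧ B.mulVec w = 0}
  let T := Σ w : {w : Fin s → K // w ≠ 0}, {B : Matrix (Fin d) (Fin s) K // B.mulVec w.1 = 0}
  have key : ∀ B : Bad, ∃ w : Fin s → K, w ≠ 0 ∧ B.1.mulVec w = 0 := fun B => B.2
  choose g hg0 hg using key
  let f : Bad × Kˣ → T := fun p =>
    ⟨⟨(p.2 : K) • g p.1, smul_ne_zero p.2.ne_zero (hg0 _)⟩,
      ⟨p.1.1, by simp only [Matrix.mulVec_smul, hg, smul_zero]⟩⟩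
  have hf : Function.Injective f := by
    rintro ⟨B, u⟩ ⟨C, v⟩ h
    have h1 : (f (B, u)).2.1 = (f (C, v)).2.1 := by rw [h]
    have h2 : (f (B, u)).1.1 = (f (C, v)).1.1 := by rw [h]
    have hBC : B = C := Subtype.ext h1
    subst hBC
    have h3 : (u : K) • g B = (v : K) • g B := h2
    have h4 : u = v := Units.ext (smul_left_injective K (hg0 B) h3)
    rw [h4]
  have h := Nat.card_le_card_of_injective f hf
  rw [Nat.card_prod, Nat.card_eq_fintype_card (α := Kˣ), Fintype.card_units] at h
  refine h.trans ?_
  rw [Nat.card_sigma]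
  refine (Finset.sum_le_card_nsmul _ _ _ fun w _ => aux_card_fix d s w.1 w.2).trans ?_
  rw [smul_eq_mul]
  refine Nat.mul_le_mul_right _ ?_
  refine (Fintype.card_subtype_le _).trans ?_
  simp

/-- Fraction of non-correctable errors: with all lower-order coefficients fixed and
the leading coefficients collected in a matrix `B`, the number of choices of
`B ∈ F_{q^m}^{d_I × s}` for which the root-finding matrix `Q(B)` fails to have full
rank `s·k` is at most `4·q^{m·d_I·s}·q^{−m(d_I+1−s)}`; equivalently, for uniformly
random `B`, `P(rank Q(B) < sk) ≤ 4·q^{−m(d_I+1−s)}`. -/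
theorem card_root_finding_failure_le
    (K : Type*) [Field K] [Fintype K]
    (q m : ℕ) (hq : IsPrimePow q) (hm : 0 < m) (hcard : Fintype.card K = q ^ m)
    (σ : RingAut K) (hσ : ∀ x : K, σ x = x ^ q)
    (dI s k L : ℕ) (hs : 1 ≤ s) (hds : s ≤ dI) (hk : 1 ≤ k) (hL : k ≤ L)
    (qc : Fin dI → Fin s → ℕ → K) :
    Nat.card {B : Matrix (Fin dI) (Fin s) K //
      (Matrix.of fun (p : Fin L × Fin dI) (c : Fin k × Fin s) =>
        if (c.1 : ℕ) ≤ (p.1 : ℕ) ∧ (p.1 : ℕ) - (c.1 : ℕ) ≤ L - k then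
          (σ ^ (-((p.1 : ℕ) : ℤ)))
            (if (p.1 : ℕ) - (c.1 : ℕ) = L - k then B p.2 c.2
             else qc p.2 c.2 ((p.1 : ℕ) - (c.1 : ℕ)))
        else 0).rank < s * k} ≤
      4 * q ^ (m * (dI * s) - m * (dI + 1 - s)) := by
  classical
  have hN2 : 2 ≤ Fintype.card K := Fintype.one_lt_card
  set N := Fintype.card K with hN
  have himp : ∀ B : Matrix (Fin dI) (Fin s) K, (Matrix.of fun (p : Fin L × Fin dI) (c : Fin k × Fin s) =>
        if (c.1 : ℕ) ≤ (p.1 : ℕ) ∧ (p.1 : ℕ) - (c.1 : ℕ) ≤ L - k then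
          (σ ^ (-((p.1 : ℕ) : ℤ)))
            (if (p.1 : ℕ) - (c.1 : ℕ) = L - k then B p.2 c.2
             else qc p.2 c.2 ((p.1 : ℕ) - (c.1 : ℕ)))
        else 0).rank < s * k → ∃ w, w ≠ 0 ∧ B.mulVec w = 0 := by
    intro B hB
    obtain ⟨v, hv0, hv⟩ := aux_exists_vec _ (lt_of_lt_of_eq hB (by simp [mul_comm]))
    have hne : (Finset.univ.filter fun b : Fin k => ∃ j, v (b, j) ≠ 0).Nonempty := by
      obtain ⟨⟨b, j⟩, hbj⟩ := Function.ne_iff.mp hv0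
      exact ⟨b, by simpa using ⟨j, hbj⟩⟩
    obtain ⟨b, hb, hmax⟩ := Finset.exists_max_image _ (fun b : Fin k => (b : ℕ)) hne
    simp only [Finset.mem_filter, Finset.mem_univ, true_and] at hb hmax
    obtain ⟨j0, hj0⟩ := hb
    have hz : ∀ b' : Fin k, (b : ℕ) < b' → ∀ j, v (b', j) = 0 := by
      intro b' hlt j
      by_contra hcon
      have := hmax b' ⟨j, hcon⟩
      omega
    have hblt := b.2
    let a : Fin L := ⟨b + (L - k), by omega⟩
    set τ : RingAut K := σ ^ (-((a : ℕ) : ℤ)) with hτ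
    refine ⟨fun j => τ.symm (v (b, j)), ?_, ?_⟩
    · intro h
      have := congrFun h j0
      simp at this
      exact hj0 this
    · ext h
      have h1 := congrFun hv (a, h)
      simp only [Matrix.mulVec, dotProduct, Pi.zero_apply, Matrix.of_apply] at h1 ⊢
      rw [Fintype.sum_prod_type, Finset.sum_eq_single b] at h1
      · apply τ.injective
        rw [map_zero, map_sum, ← h1]
        refine Finset.sum_congr rfl fun j _ => ?_
        have e1 : (a : ℕ) - b = L - k := by simp [a]
        have e2 : (b : ℕ) ≤ a := by simp [a]
        rw [map_mul, RingEquiv.apply_symm_apply]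
        simp only [e1, e2, le_refl, and_self, if_true]
        rfl
      · intro b' _ hb'
        refine Finset.sum_eq_zero fun j _ => ?_
        rcases lt_or_ge (b : ℕ) b' with hlt | hge
        · rw [hz b' hlt, mul_zero]
        · have : (b' : ℕ) ≠ b := fun e => hb' (Fin.ext e)
          rw [if_neg, zero_mul]
          simp only [a]
          omega
      · simp
  refine (Nat.card_le_card_of_injective (Subtype.map (q := fun B : Matrix (Fin dI) (Fin s) K => ∃ w, w ≠ 0 ∧ B.mulVec w = 0) id himp)
    (Subtype.map_injective _ Function.injective_id)).trans ?_
  have hbad := aux_card_bad (K := K) dI s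
  rw [← hN] at hbad
  have hexp : q ^ (m * (dI * s) - m * (dI + 1 - s)) = N ^ (s - 1) * N ^ (dI * (s - 1)) := by
    rw [hcard, ← pow_add, ← pow_mul, ← Nat.mul_sub]
    congr 2
    obtain ⟨t, rfl⟩ := Nat.exists_eq_add_of_le' hs
    obtain ⟨r, rfl⟩ := Nat.exists_eq_add_of_le hds
    have : t + 1 + r + 1 - (t + 1) = r + 1 := by omega
    rw [this, Nat.add_sub_cancel]
    apply Nat.sub_eq_of_eq_add
    ring
  rw [hexp]
  refine Nat.le_of_mul_le_mul_right (hbad.trans ?_) (show 0 < N - 1 by omega)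
  have hps : N ^ s = N ^ (s - 1) * N := by
    rw [← pow_succ, Nat.sub_add_cancel hs]
  rw [hps]
  calc N ^ (s - 1) * N * N ^ (dI * (s - 1))
      = N ^ (s - 1) * N ^ (dI * (s - 1)) * N := by ring
    _ ≤ N ^ (s - 1) * N ^ (dI * (s - 1)) * (4 * (N - 1)) :=
        Nat.mul_le_mul_left _ (by omega)
    _ = 4 * (N ^ (s - 1) * N ^ (dI * (s - 1))) * (N - 1) := by ring
end

section
/- Let s ≥ 1, k ≥ 1 and e ≥ 0 be integers. For each j ∈ {1,…,s} let Q^{(j)}_0, Q^{(j)}_1, …, Q^{(j)}_s be linearized polynomials over F_{q^m} such that deg_q(Q^{(j)}_j) = e (so the coefficient of x^{q^e} in Q^{(j)}_j is nonzero), deg_q(Q^{(j)}_{j'}) ≤ e for all j' < j, and deg_q(Q^{(j)}_{j'}) < e for all j' > j. Then there is at most one s-tuple (f^{(1)}, …, f^{(s)}) of linearized polynomials over F_{q^m} with deg_q(f^{(j)}) < k for all j such that, for every j ∈ {1,…,s}, the linearized polynomial Q^{(j)}_0(x) + Σ_{j'=1}^{s} (Q^{(j)}_{j'} ∘ f^{(j')})(x)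 is the zero polynomial. -/
/-- Composition with a linearized polynomial is additive (subtractive). -/
theorem comp_sub_of_linearized {K : Type*} [Field K] (p : ℕ) [Fact p.Prime] [CharP K p] (a : ℕ)
    (Q f g : Polynomial K) (hQ : IsLinearized (p ^ a) Q) :
    Q.comp (f - g) = Q.comp f - Q.comp g := by
  simp only [Polynomial.comp, Polynomial.eval₂_eq_sum, Polynomial.sum_def]
  rw [← Finset.sum_sub_distrib]
  refine Finset.sum_congr rfl fun n hn => ?_
  obtain ⟨i, rfl⟩ := hQ n (Polynomial.mem_support_iff.mp hn)
  rw [← pow_mul, sub_pow_char_pow, mul_sub]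

/-- Uniqueness of the roots of a system of `y_j`-minimal interpolation polynomials:
if for every `j` the polynomial `Q⁽ʲ⁾_j` has q-degree exactly `e`, the `Q⁽ʲ⁾_{j'}`
with `j' < j` have q-degree at most `e`, and those with `j' > j` have q-degree
strictly less than `e`, then there is at most one tuple `(f⁽¹⁾,…,f⁽ˢ⁾)` of linearized
polynomials of q-degree `< k` with `Q⁽ʲ⁾₀ + Σ_{j'} Q⁽ʲ⁾_{j'} ∘ f⁽ʲ'⁾ = 0` for all `j`. -/
theorem unique_root_of_y_minimal_polys
    (K : Type*) [Field K] [Fintype K]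
    (q m : ℕ) (hq : IsPrimePow q) (hm : 0 < m) (hcard : Fintype.card K = q ^ m)
    (s k e : ℕ) (hs : 1 ≤ s) (hk : 1 ≤ k)
    (Q₀ : Fin s → Polynomial K) (Qy : Fin s → Fin s → Polynomial K)
    (hQ₀l : ∀ j, IsLinearized q (Q₀ j))
    (hQyl : ∀ j j', IsLinearized q (Qy j j'))
    (hdiag : ∀ j, (Qy j j).degree = ((q ^ e : ℕ) : WithBot ℕ))
    (hlow : ∀ j j' : Fin s, j' < j → (Qy j j').degree ≤ ((q ^ e : ℕ) : WithBot ℕ))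
    (hup : ∀ j j' : Fin s, j < j' → (Qy j j').degree < ((q ^ e : ℕ) : WithBot ℕ)) :
    ∀ f g : Fin s → Polynomial K,
      (∀ j, IsLinearized q (f j)) → (∀ j, (f j).degree < ((q ^ k : ℕ) : WithBot ℕ)) →
      (∀ j, IsLinearized q (g j)) → (∀ j, (g j).degree < ((q ^ k : ℕ) : WithBot ℕ)) →
      (∀ j, Q₀ j + ∑ j' : Fin s, (Qy j j').comp (f j') = 0) →
      (∀ j, Q₀ j + ∑ j' : Fin s, (Qy j j').comp (g j') = 0) →
      f = g := by
  intro f g hf _ hg _ hfe hge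
  obtain ⟨p, a, hp, ha, rfl⟩ := hq
  have hp' : p.Prime := hp.nat_prime
  have : Fact p.Prime := ⟨hp'⟩
  have : CharP K p := by
    obtain ⟨r, hr⟩ := CharP.exists K
    obtain ⟨n, hrp, hrn⟩ := FiniteField.card K r
    have : r ∣ (p ^ a) ^ m := by
      rw [← hcard, hrn]
      exact dvd_pow_self r n.ne_zero
    have : r = p :=
      (Nat.prime_dvd_prime_iff_eq hrp hp').mp
        (hrp.dvd_of_dvd_pow (hrp.dvd_of_dvd_pow this))
    exact this ▸ hr
  have hE : 0 < (p ^ a) ^ e := by have := hp'.pos; positivity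
  have hsum : ∀ j, ∑ j' : Fin s, (Qy j j').comp (f j' - g j') = 0 := by
    intro j
    have h1 := hfe j
    have h2 := hge j
    simp only [comp_sub_of_linearized p a _ _ _ (hQyl j _), Finset.sum_sub_distrib]
    linear_combination h1 - h2
  have hc0 : ∀ P : Polynomial K, IsLinearized (p ^ a) P → P.coeff 0 = 0 := by
    intro P hP
    by_contra h
    obtain ⟨i, hi⟩ := hP 0 h
    have := hp'.pos
    have : 0 < (p ^ a) ^ i := by positivity
    omega
  have : Nonempty (Fin s) := ⟨⟨0, hs⟩⟩
  obtain ⟨j₀, -, hj₀⟩ := Finset.exists_max_image (Finset.univ : Finset (Fin s))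
    (fun j => (f j - g j).natDegree) Finset.univ_nonempty
  by_cases hd : (f j₀ - g j₀).natDegree = 0
  · funext j
    have h1 : (f j - g j).natDegree = 0 := by
      have := hj₀ j (Finset.mem_univ j)
      omega
    rw [← sub_eq_zero, Polynomial.eq_C_of_natDegree_eq_zero h1, Polynomial.coeff_sub,
      hc0 _ (hf j), hc0 _ (hg j)]
    simp
  exfalso
  obtain ⟨j, hjm, hj⟩ := Finset.exists_min_image
    ((Finset.univ : Finset (Fin s)).filter
      (fun j => (f j - g j).natDegree = (f j₀ - g j₀).natDegree)) id ⟨j₀, by simp⟩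
  simp only [Finset.mem_filter, Finset.mem_univ, true_and, id, forall_true_left] at hjm hj hj₀
  rw [← hjm] at hd hj₀ hj
  have hQd : (Qy j j).natDegree = (p ^ a) ^ e := Polynomial.natDegree_eq_of_degree_eq_some (hdiag j)
  have hco := congrArg (fun P => Polynomial.coeff P ((p ^ a) ^ e * (f j - g j).natDegree)) (hsum j)
  simp only [Polynomial.finsetSum_coeff, Polynomial.coeff_zero] at hco
  rw [Finset.sum_eq_single j] at hco
  · rw [← hQd, ← Polynomial.natDegree_comp] at hco
    have h0 := Polynomial.leadingCoeff_eq_zero.mp hco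
    have h1 : ((Qy j j).comp (f j - g j)).natDegree = 0 := by rw [h0]; simp
    rw [Polynomial.natDegree_comp, hQd] at h1
    rcases Nat.mul_eq_zero.mp h1 with h | h
    · omega
    · exact hd h
  · intro j' _ hne
    apply Polynomial.coeff_eq_zero_of_natDegree_lt
    rw [Polynomial.natDegree_comp]
    have hle := hj₀ j'
    rcases lt_or_gt_of_ne hne with hlt | hgt
    · have h1 : (Qy j j').natDegree ≤ (p ^ a) ^ e := Polynomial.natDegree_le_of_degree_le (hlow j j' hlt)
      have h2 : (f j' - g j').natDegree < (f j - g j).natDegree := by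
        refine lt_of_le_of_ne hle fun h => ?_
        exact absurd (hj j' h) (not_le.mpr hlt)
      exact Nat.mul_lt_mul_of_le_of_lt h1 h2 hE
    · have h1 : (Qy j j').natDegree < (p ^ a) ^ e := by
        by_cases hz : Qy j j' = 0
        · rw [hz]; simpa using hE
        · exact (Polynomial.natDegree_lt_iff_degree_lt hz).mpr (hup j j' hgt)
      exact Nat.mul_lt_mul_of_lt_of_le h1 hle (Nat.pos_of_ne_zero hd)
  · intro h
    exact absurd (Finset.mem_univ j) h
end
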